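/- Let u ∈ ℝ and v ≥ 0. Then u :=BLN v holds if and only if u = v or u ≤ −v. -/

import Mathlib

/-! With `0 ≤ v`, testing the relation at `k = v` is decisive. If `u > v` it would give `u² ≤ v²`,
impossible since `u > v ≥ 0`; if `u < v` it gives `u² ≥ v²`, and dividing `(v - u) * (u + v) ≤ 0` by
`v - u > 0` leaves `u ≤ -v`. Conversely, `u ≤ -v` puts every `k` between `u` and `v` in `[u, -u]`,
so that `k² ≤ u²`. -/

open MeasureTheory Set Filter

/-- The Bardos–Leroux–Nédélec boundary relation `u :=BLN v`:
for every `k` between `u` and `v`, `(u²/2 - k²/2)·sign(u - v) ≤ 0`. -/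
def BLN (u v : ℝ) : Prop :=
  ∀ k : ℝ, min u v ≤ k → k ≤ max u v →
    (u ^ 2 / 2 - k ^ 2 / 2) * Real.sign (u - v) ≤ 0

theorem stmt16 (u v : ℝ) (hv : 0 ≤ v) : BLN u v ↔ u = v ∨ u ≤ -v := by
  constructor
  · intro h
    -- The endpoint `k = v` already carries all the information.
    have hk := h v (min_le_right u v) (le_max_right u v)
    rcases lt_trichotomy u v with huv | huv | huv
    · right
      rw [Real.sign_of_neg (sub_neg.mpr huv)] at hk
      by_contra! hlt
      nlinarith [mul_pos (sub_pos.mpr huv) (neg_lt_iff_pos_add.mp hlt)]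
    · exact Or.inl huv
    · rw [Real.sign_of_pos (sub_pos.mpr huv)] at hk
      nlinarith
  · rintro (rfl | huv) k hk₁ hk₂
    · simp
    · rcases (show u ≤ v by linarith).lt_or_eq with hlt | rfl
      · rw [min_eq_left hlt.le] at hk₁
        rw [max_eq_right hlt.le] at hk₂
        rw [Real.sign_of_neg (sub_neg.mpr hlt)]
        -- `u ≤ k ≤ v ≤ -u` gives `k² ≤ u²`.
        nlinarith [mul_nonneg (sub_nonneg.mpr hk₁) (show 0 ≤ -u - k by linarith)]
      · simp
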